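/- For (s₁,s₂,s₃) ∈ ℂ³ with Re(sᵢ) > 0 for i = 1,2,3, the integral Z(s₁,s₂,s₃) = ∫_{ℤ_p²∖{xy(x−y)=0}} |x|_p^{s₁} |y|_p^{s₂} |x−y|_p^{s₃} dx dy equals [ (1−p^{−1})² p^{−1−s₁}/(1−p^{−1−s₁}) + (1−p^{−1})² p^{−1−s₂}/(1−p^{−1−s₂}) + p^{−2}(p−1)(p−2) + p^{−2−s₃}(p−1)(1−p^{−1})/(1−p^{−1−s₃}) ] / (1 − p^{−2−s₁−s₂−s₃}). -/

import Mathlib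

open MeasureTheory Finset

noncomputable section

instance padicMS (p : ℕ) [Fact p.Prime] : MeasurableSpace ℚ_[p] := borel _
instance padicBS (p : ℕ) [Fact p.Prime] : BorelSpace ℚ_[p] := ⟨rfl⟩

/-- The closed unit ball of `ℚ_[p]` (i.e. `ℤ_[p]`) as a positive compact subset. -/
def padicBall (p : ℕ) [Fact p.Prime] : TopologicalSpace.PositiveCompacts ℚ_[p] where
  carrier := Metric.closedBall 0 1
  isCompact' := isCompact_closedBall 0 1
  interior_nonempty' := ⟨0, Metric.ball_subset_interior_closedBall (Metric.mem_ball_self one_pos)⟩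

/-- The Haar measure on `(ℚ_[p], +)`, normalized so that `ℤ_[p]` has measure `1`. -/
def padicHaar (p : ℕ) [Fact p.Prime] : Measure ℚ_[p] :=
  Measure.addHaarMeasure (padicBall p)

instance padicHaarSF (p : ℕ) [Fact p.Prime] : SigmaFinite (padicHaar p) := by
  unfold padicHaar; infer_instance

/-- The product of normalized Haar measures on a finite power of `ℚ_[p]`. -/
def padicPi (p : ℕ) [Fact p.Prime] (ι : Type) [Fintype ι] : Measure (ι → ℚ_[p]) :=
  Measure.pi fun _ => padicHaar p

section padicIntegrals

open Metric Set

variable {p : ℕ} [Fact p.Prime]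

instance padicHaar_isAddHaarMeasure : (padicHaar p).IsAddHaarMeasure := by
  unfold padicHaar; infer_instance

lemma padicHaar_closedBall : padicHaar p (closedBall 0 1) = 1 :=
  Measure.addHaarMeasure_self (K₀ := padicBall p)

lemma Padic.closedBall_eq_iUnion_ball :
    (closedBall 0 1 : Set ℚ_[p]) = ⋃ n ∈ Finset.range p, ball (n : ℚ_[p]) 1 := by
  ext x
  simp only [mem_closedBall_zero_iff, Finset.mem_range, mem_iUnion, mem_ball, dist_eq_norm,
    exists_prop]
  constructor
  · intro hx
    obtain ⟨x, rfl⟩ : ∃ z : ℤ_[p], (z : ℚ_[p]) = x := ⟨⟨x, hx⟩, rfl⟩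
    obtain ⟨n, hn, h⟩ := PadicInt.exists_mem_range x
    rw [IsLocalRing.mem_maximalIdeal, PadicInt.mem_nonunits, PadicInt.norm_def] at h
    rw [PadicInt.coe_sub, PadicInt.coe_natCast] at h
    exact ⟨n, hn, h⟩
  · rintro ⟨n, -, h⟩
    have hn : ‖(n : ℚ_[p])‖ ≤ 1 := by simpa using Padic.norm_int_le_one (p := p) n
    simpa using (Padic.nonarchimedean (x - (n : ℚ_[p])) (n : ℚ_[p])).trans (max_le h.le hn)

lemma Padic.pairwiseDisjoint_ball_natCast :
    (Finset.range p : Set ℕ).PairwiseDisjoint fun n => ball (n : ℚ_[p]) 1 := by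
  intro m hm n hn hmn
  refine Set.disjoint_left.2 fun x hxm hxn => hmn ?_
  simp only [mem_ball, dist_eq_norm, Finset.coe_range, Set.mem_Iio] at hxm hxn hm hn
  have h : ‖(((n : ℤ) - m : ℤ) : ℚ_[p])‖ < 1 := by
    have := (Padic.nonarchimedean (x - (m : ℚ_[p])) (-(x - (n : ℚ_[p])))).trans_lt
      (max_lt hxm (by rwa [norm_neg]))
    rwa [show (((n : ℤ) - m : ℤ) : ℚ_[p]) = x - m + -(x - n) by push_cast; ring]
  rw [Padic.norm_intCast_lt_one_iff] at h
  have := (Nat.modEq_iff_dvd.2 h)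
  rwa [Nat.ModEq, Nat.mod_eq_of_lt hm, Nat.mod_eq_of_lt hn] at this

lemma padicHaar_ball : padicHaar p (ball 0 1) = (p : ENNReal)⁻¹ := by
  have h := padicHaar_closedBall (p := p)
  rw [Padic.closedBall_eq_iUnion_ball,
    measure_biUnion_finset Padic.pairwiseDisjoint_ball_natCast fun _ _ => measurableSet_ball] at h
  simp only [Measure.addHaar_ball_center, Finset.sum_const, Finset.card_range, nsmul_eq_mul] at h
  exact ENNReal.eq_inv_of_mul_eq_one_left (by rwa [mul_comm])

lemma padicHaar_real_ball : (padicHaar p).real (ball 0 1) = (p : ℝ)⁻¹ := by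
  simp [Measure.real, padicHaar_ball]

lemma Padic.natCast_ne_zero : (p : ℚ_[p]) ≠ 0 :=
  Nat.cast_ne_zero.2 (Fact.out : p.Prime).ne_zero

lemma Padic.preimage_mul_ball :
    ((p : ℚ_[p])⁻¹ * ·) ⁻¹' closedBall 0 1 = ball 0 1 := by
  ext x
  have hp : (0 : ℝ) < p := mod_cast (Fact.out : p.Prime).pos
  have h := Padic.norm_le_pow_iff_norm_lt_pow_add_one x (-1)
  simp only [zpow_neg, zpow_one, neg_add_cancel, zpow_zero] at h
  simp only [Set.mem_preimage, mem_closedBall_zero_iff, mem_ball_zero_iff, norm_mul, norm_inv,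
    Padic.norm_p, inv_inv]
  rw [← h, ← one_div, le_div_iff₀' hp]

lemma map_inv_mul_padicHaar :
    (padicHaar p).map ((p : ℚ_[p])⁻¹ * ·) = (p : ENNReal)⁻¹ • padicHaar p := by
  let e : ℚ_[p] ≃ₜ ℚ_[p] := Homeomorph.mulLeft₀ _ (inv_ne_zero (Padic.natCast_ne_zero (p := p)))
  have hinv : ((padicHaar p).map ((p : ℚ_[p])⁻¹ * ·)).IsAddLeftInvariant :=
    isAddLeftInvariant_map (AddMonoidHom.mulLeft (p : ℚ_[p])⁻¹).toAddHom
      e.continuous.measurable e.surjective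
  have hfin : SigmaFinite ((padicHaar p).map ((p : ℚ_[p])⁻¹ * ·)) :=
    e.toMeasurableEquiv.sigmaFinite_map
  have h := Measure.addHaarMeasure_unique ((padicHaar p).map ((p : ℚ_[p])⁻¹ * ·)) (padicBall p)
  rw [h]
  congr 1
  rw [Measure.map_apply (measurable_const_mul _) (padicBall p).isCompact.measurableSet,
    ← padicHaar_ball, ← Padic.preimage_mul_ball]
  rfl

lemma setIntegral_ball_eq (g : ℚ_[p] → ℂ) :
    ∫ x in ball 0 1, g x ∂padicHaar p =
      (p : ℂ)⁻¹ * ∫ x in closedBall 0 1, g (p * x) ∂padicHaar p := by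
  let e : ℚ_[p] ≃ₜ ℚ_[p] := Homeomorph.mulLeft₀ _ (inv_ne_zero (Padic.natCast_ne_zero (p := p)))
  have h := setIntegral_map_equiv (μ := padicHaar p) e.toMeasurableEquiv
    (fun x => g (p * x)) (closedBall 0 1)
  have he : ⇑e.toMeasurableEquiv = ((p : ℚ_[p])⁻¹ * ·) := rfl
  rw [he, map_inv_mul_padicHaar, Padic.preimage_mul_ball, Measure.restrict_smul,
    integral_smul_measure] at h
  simp only [mul_inv_cancel_left₀ Padic.natCast_ne_zero] at h
  rw [← h]
  simp

lemma Padic.cpow_norm_natCast_mul (x : ℚ_[p]) (s : ℂ) :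
    (‖(p : ℚ_[p]) * x‖ : ℂ) ^ s = (p : ℂ) ^ (-s) * (‖x‖ : ℂ) ^ s := by
  rw [norm_mul, Complex.ofReal_mul, Complex.mul_cpow_ofReal_nonneg (norm_nonneg _) (norm_nonneg _),
    Padic.norm_p, Complex.ofReal_inv, Complex.ofReal_natCast,
    Complex.inv_cpow _ _ (by simp [Complex.natCast_arg, Real.pi_ne_zero.symm]), Complex.cpow_neg]

lemma norm_cpow_norm_le_one {E : Type*} [SeminormedAddCommGroup E] {x : E} (hx : ‖x‖ ≤ 1) {s : ℂ}
    (hs : 0 < s.re) : ‖(‖x‖ : ℂ) ^ s‖ ≤ 1 := by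
  rw [Complex.norm_cpow_eq_rpow_re_of_nonneg (norm_nonneg _) hs.ne']
  exact Real.rpow_le_one (norm_nonneg _) hx hs.le

lemma measurable_cpow_norm (s : ℂ) : Measurable fun x : ℚ_[p] => (‖x‖ : ℂ) ^ s := by
  fun_prop

lemma integrableOn_cpow_norm {s : ℂ} (hs : 0 < s.re) :
    IntegrableOn (fun x : ℚ_[p] => (‖x‖ : ℂ) ^ s) (closedBall 0 1) (padicHaar p) := by
  refine Measure.integrableOn_of_bounded (M := 1) (by simp [padicHaar_closedBall])
    (measurable_cpow_norm s).aestronglyMeasurable ?_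
  filter_upwards [ae_restrict_mem measurableSet_closedBall] with x hx
  exact norm_cpow_norm_le_one (mem_closedBall_zero_iff.1 hx) hs

lemma setIntegral_closedBall_eq_add {g : ℚ_[p] → ℂ}
    (hg : IntegrableOn g (closedBall 0 1) (padicHaar p)) :
    ∫ x in closedBall 0 1, g x ∂padicHaar p =
      ∫ x in ball 0 1, g x ∂padicHaar p + ∫ x in sphere 0 1, g x ∂padicHaar p := by
  rw [← ball_union_sphere, setIntegral_union (sphere_disjoint_ball.symm)
    isClosed_sphere.measurableSet (hg.mono_set ball_subset_closedBall)
    (hg.mono_set sphere_subset_closedBall)]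

lemma padicHaar_real_sphere : (padicHaar p).real (sphere 0 1) = 1 - (p : ℝ)⁻¹ := by
  rw [← closedBall_sdiff_ball, measureReal_sdiff ball_subset_closedBall measurableSet_ball
    (by simp [padicHaar_closedBall]), padicHaar_real_ball, Measure.real, padicHaar_closedBall,
    ENNReal.toReal_one]

lemma natCast_cpow_ne_one {s : ℂ} (hs : s.re < 0) : (1 : ℂ) - (p : ℂ) ^ s ≠ 0 := by
  have hp := (Fact.out : p.Prime).one_lt
  intro h
  have hnorm := congrArg norm (sub_eq_zero.1 h)
  rw [Complex.norm_natCast_cpow_of_pos (by lia), norm_one] at hnorm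
  exact (Real.rpow_lt_one_of_one_lt_of_neg (by exact_mod_cast hp) hs).ne' hnorm

lemma natCast_cpow_neg_one_sub (s : ℂ) : (p : ℂ) ^ (-1 - s) = (p : ℂ)⁻¹ * (p : ℂ) ^ (-s) := by
  rw [sub_eq_add_neg, Complex.cpow_add _ _ (Nat.cast_ne_zero.2 (Fact.out : p.Prime).ne_zero),
    Complex.cpow_neg_one]

lemma setIntegral_cpow_norm_ball_eq_mul (s : ℂ) :
    ∫ x in ball 0 1, (‖x‖ : ℂ) ^ s ∂padicHaar p =
      (p : ℂ) ^ (-1 - s) * ∫ x in closedBall 0 1, (‖x‖ : ℂ) ^ s ∂padicHaar p := by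
  rw [setIntegral_ball_eq]
  simp only [Padic.cpow_norm_natCast_mul]
  rw [integral_const_mul, natCast_cpow_neg_one_sub, mul_assoc]

lemma setIntegral_sphere_one : ∫ _ in sphere (0 : ℚ_[p]) 1, (1 : ℂ) ∂padicHaar p =
    1 - (p : ℂ)⁻¹ := by
  simp [padicHaar_real_sphere]

lemma setIntegral_cpow_norm_closedBall {s : ℂ} (hs : 0 < s.re) :
    ∫ x in closedBall 0 1, (‖x‖ : ℂ) ^ s ∂padicHaar p =
      (1 - (p : ℂ)⁻¹) / (1 - (p : ℂ) ^ (-1 - s)) := by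
  have h := setIntegral_closedBall_eq_add (integrableOn_cpow_norm (p := p) hs)
  have hU : ∫ x in sphere 0 1, (‖x‖ : ℂ) ^ s ∂padicHaar p = 1 - (p : ℂ)⁻¹ := by
    rw [← setIntegral_sphere_one]
    refine setIntegral_congr_fun isClosed_sphere.measurableSet fun x hx => ?_
    simp [mem_sphere_zero_iff_norm.1 hx]
  rw [setIntegral_cpow_norm_ball_eq_mul, hU] at h
  rw [eq_div_iff (natCast_cpow_ne_one (by simp; linarith))]
  linear_combination h

lemma setIntegral_cpow_norm_ball {s : ℂ} (hs : 0 < s.re) :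
    ∫ x in ball 0 1, (‖x‖ : ℂ) ^ s ∂padicHaar p =
      (1 - (p : ℂ)⁻¹) * (p : ℂ) ^ (-1 - s) / (1 - (p : ℂ) ^ (-1 - s)) := by
  rw [setIntegral_cpow_norm_ball_eq_mul, setIntegral_cpow_norm_closedBall hs]
  ring

lemma Padic.norm_sub_eq_one_of_ball_of_sphere {x y : ℚ_[p]} (hx : ‖x‖ < 1) (hy : ‖y‖ = 1) :
    ‖x - y‖ = 1 := by
  rw [sub_eq_add_neg, Padic.add_eq_max_of_ne (by rw [norm_neg, hy]; exact hx.ne), norm_neg, hy,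
    max_eq_right hx.le]

lemma Padic.norm_sub_le_one {x y : ℚ_[p]} (hx : ‖x‖ ≤ 1) (hy : ‖y‖ ≤ 1) : ‖x - y‖ ≤ 1 := by
  rw [sub_eq_add_neg]
  exact (Padic.nonarchimedean _ _).trans (max_le hx (by rwa [norm_neg]))

lemma setIntegral_cpow_norm_sub_closedBall {x : ℚ_[p]} (hx : ‖x‖ ≤ 1) (s : ℂ) :
    ∫ y in closedBall 0 1, (‖x - y‖ : ℂ) ^ s ∂padicHaar p =
      ∫ y in closedBall 0 1, (‖y‖ : ℂ) ^ s ∂padicHaar p := by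
  rw [← integral_indicator measurableSet_closedBall, ← integral_indicator measurableSet_closedBall,
    ← integral_sub_left_eq_self _ _ x]
  congr 1 with y
  have : x - y ∈ closedBall (0 : ℚ_[p]) 1 ↔ y ∈ closedBall (0 : ℚ_[p]) 1 := by
    simp only [mem_closedBall_zero_iff]
    exact ⟨fun h => by simpa using Padic.norm_sub_le_one hx h, Padic.norm_sub_le_one hx⟩
  simp [indicator, this]

lemma setIntegral_cpow_norm_sub_sphere {x : ℚ_[p]} (hx : ‖x‖ = 1) {s : ℂ} (hs : 0 < s.re) :
    ∫ y in sphere 0 1, (‖x - y‖ : ℂ) ^ s ∂padicHaar p =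
      (1 - (p : ℂ)⁻¹) / (1 - (p : ℂ) ^ (-1 - s)) - (p : ℂ)⁻¹ := by
  have hf : IntegrableOn (fun y => (‖x - y‖ : ℂ) ^ s) (closedBall 0 1) (padicHaar p) := by
    refine Measure.integrableOn_of_bounded (M := 1) (by simp [padicHaar_closedBall])
      ((measurable_cpow_norm s).comp (measurable_const.sub measurable_id)).aestronglyMeasurable ?_
    filter_upwards [ae_restrict_mem measurableSet_closedBall] with y hy
    exact norm_cpow_norm_le_one (Padic.norm_sub_le_one hx.le (mem_closedBall_zero_iff.1 hy)) hs
  have h := setIntegral_closedBall_eq_add hf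
  have hP : ∫ y in ball 0 1, (‖x - y‖ : ℂ) ^ s ∂padicHaar p = (p : ℂ)⁻¹ := by
    rw [setIntegral_congr_fun (g := fun _ => 1) measurableSet_ball fun y hy => ?_]
    · simp [padicHaar_real_ball]
    · simp [norm_sub_rev x y, Padic.norm_sub_eq_one_of_ball_of_sphere (mem_ball_zero_iff.1 hy) hx]
  rw [setIntegral_cpow_norm_sub_closedBall hx.le, setIntegral_cpow_norm_closedBall hs, hP] at h
  linear_combination -h

/-- The integrand of the four-point zeta function. -/
def fourPointIntegrand (s₁ s₂ s₃ : ℂ) (x : ℚ_[p] × ℚ_[p]) : ℂ :=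
  (‖x.1‖ : ℂ) ^ s₁ * (‖x.2‖ : ℂ) ^ s₂ * (‖x.1 - x.2‖ : ℂ) ^ s₃

section fourPoint

variable {s₁ s₂ s₃ : ℂ}

lemma integrableOn_fourPointIntegrand (h₁ : 0 < s₁.re) (h₂ : 0 < s₂.re) (h₃ : 0 < s₃.re) :
    IntegrableOn (fourPointIntegrand s₁ s₂ s₃) (closedBall 0 1 ×ˢ closedBall 0 1)
      ((padicHaar p).prod (padicHaar p)) := by
  have hm : Measurable (fourPointIntegrand (p := p) s₁ s₂ s₃) :=
    (((measurable_cpow_norm s₁).comp measurable_fst).mul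
      ((measurable_cpow_norm s₂).comp measurable_snd)).mul
      ((measurable_cpow_norm s₃).comp (measurable_fst.sub measurable_snd))
  refine Measure.integrableOn_of_bounded (M := 1) (by simp [padicHaar_closedBall])
    hm.aestronglyMeasurable ?_
  filter_upwards [ae_restrict_mem (measurableSet_closedBall.prod measurableSet_closedBall)]
    with x hx
  simp only [mem_prod, mem_closedBall_zero_iff] at hx
  rw [fourPointIntegrand, norm_mul, norm_mul]
  exact mul_le_one₀ (mul_le_one₀ (norm_cpow_norm_le_one hx.1 h₁) (norm_nonneg _)
    (norm_cpow_norm_le_one hx.2 h₂)) (norm_nonneg _)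
    (norm_cpow_norm_le_one (Padic.norm_sub_le_one hx.1 hx.2) h₃)

lemma fourPointIntegrand_natCast_mul (x y : ℚ_[p]) :
    fourPointIntegrand s₁ s₂ s₃ ((p : ℚ_[p]) * x, (p : ℚ_[p]) * y) =
      (p : ℂ) ^ (-s₁) * (p : ℂ) ^ (-s₂) * (p : ℂ) ^ (-s₃) *
        fourPointIntegrand s₁ s₂ s₃ (x, y) := by
  simp only [fourPointIntegrand, ← mul_sub, Padic.cpow_norm_natCast_mul]
  ring

lemma setIntegral_fourPointIntegrand_ball_ball (h₁ : 0 < s₁.re) (h₂ : 0 < s₂.re)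
    (h₃ : 0 < s₃.re) :
    ∫ x in ball 0 1 ×ˢ ball 0 1, fourPointIntegrand s₁ s₂ s₃ x
        ∂((padicHaar p).prod (padicHaar p)) =
      (p : ℂ) ^ (-2 - s₁ - s₂ - s₃) * ∫ x in closedBall 0 1 ×ˢ closedBall 0 1,
        fourPointIntegrand s₁ s₂ s₃ x ∂((padicHaar p).prod (padicHaar p)) := by
  have hf := integrableOn_fourPointIntegrand (p := p) h₁ h₂ h₃
  have hp : (p : ℂ) ≠ 0 := Nat.cast_ne_zero.2 (Fact.out : p.Prime).ne_zero
  rw [setIntegral_prod _ hf, setIntegral_prod _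
    (hf.mono_set (prod_mono ball_subset_closedBall ball_subset_closedBall)),
    setIntegral_ball_eq]
  simp_rw [setIntegral_ball_eq, fourPointIntegrand_natCast_mul, integral_const_mul]
  rw [show -2 - s₁ - s₂ - s₃ = -1 + -1 + -s₁ + -s₂ + -s₃ by ring]
  simp only [Complex.cpow_add _ _ hp, Complex.cpow_neg_one]
  ring

lemma setIntegral_fourPointIntegrand_ball_sphere (h₁ : 0 < s₁.re) :
    ∫ x in ball 0 1 ×ˢ sphere 0 1, fourPointIntegrand s₁ s₂ s₃ x
        ∂((padicHaar p).prod (padicHaar p)) =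
      (1 - (p : ℂ)⁻¹) ^ 2 * (p : ℂ) ^ (-1 - s₁) / (1 - (p : ℂ) ^ (-1 - s₁)) := by
  rw [setIntegral_congr_fun (g := fun x => (‖x.1‖ : ℂ) ^ s₁ * (fun _ => 1) x.2)
    (measurableSet_ball.prod isClosed_sphere.measurableSet) fun x hx => ?_,
    setIntegral_prod_mul (fun x => (‖x‖ : ℂ) ^ s₁) fun _ => 1, setIntegral_cpow_norm_ball h₁, setIntegral_sphere_one]
  · ring
  · simp only [mem_prod, mem_ball_zero_iff, mem_sphere_zero_iff_norm] at hx
    simp [fourPointIntegrand, hx.2, Padic.norm_sub_eq_one_of_ball_of_sphere hx.1 hx.2]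

lemma setIntegral_fourPointIntegrand_sphere_ball (h₂ : 0 < s₂.re) :
    ∫ x in sphere 0 1 ×ˢ ball 0 1, fourPointIntegrand s₁ s₂ s₃ x
        ∂((padicHaar p).prod (padicHaar p)) =
      (1 - (p : ℂ)⁻¹) ^ 2 * (p : ℂ) ^ (-1 - s₂) / (1 - (p : ℂ) ^ (-1 - s₂)) := by
  rw [setIntegral_congr_fun (g := fun x => (fun _ => 1) x.1 * (‖x.2‖ : ℂ) ^ s₂)
    (isClosed_sphere.measurableSet.prod measurableSet_ball) fun x hx => ?_,
    setIntegral_prod_mul (fun _ => 1) fun y => (‖y‖ : ℂ) ^ s₂, setIntegral_cpow_norm_ball h₂, setIntegral_sphere_one]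
  · ring
  · simp only [mem_prod, mem_ball_zero_iff, mem_sphere_zero_iff_norm] at hx
    simp [fourPointIntegrand, hx.1, norm_sub_rev x.1,
      Padic.norm_sub_eq_one_of_ball_of_sphere hx.2 hx.1]

lemma setIntegral_fourPointIntegrand_sphere_sphere (h₁ : 0 < s₁.re) (h₂ : 0 < s₂.re)
    (h₃ : 0 < s₃.re) :
    ∫ x in sphere 0 1 ×ˢ sphere 0 1, fourPointIntegrand s₁ s₂ s₃ x
        ∂((padicHaar p).prod (padicHaar p)) =
      (1 - (p : ℂ)⁻¹) * ((1 - (p : ℂ)⁻¹) / (1 - (p : ℂ) ^ (-1 - s₃)) - (p : ℂ)⁻¹) := by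
  have hf := (integrableOn_fourPointIntegrand (p := p) h₁ h₂ h₃).mono_set
    (prod_mono sphere_subset_closedBall sphere_subset_closedBall)
  rw [setIntegral_prod _ hf, ← setIntegral_sphere_one, ← integral_mul_const]
  refine setIntegral_congr_fun isClosed_sphere.measurableSet fun x hx => ?_
  rw [mem_sphere_zero_iff_norm] at hx
  rw [setIntegral_sphere_one, one_mul, ← setIntegral_cpow_norm_sub_sphere hx h₃]
  refine setIntegral_congr_fun isClosed_sphere.measurableSet fun y hy => ?_
  simp [fourPointIntegrand, hx, mem_sphere_zero_iff_norm.1 hy]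

lemma setIntegral_closedBall_prod_eq_add {f : ℚ_[p] × ℚ_[p] → ℂ}
    (hf : IntegrableOn f (closedBall 0 1 ×ˢ closedBall 0 1) ((padicHaar p).prod (padicHaar p))) :
    ∫ x in closedBall 0 1 ×ˢ closedBall 0 1, f x ∂((padicHaar p).prod (padicHaar p)) =
      (∫ x in ball 0 1 ×ˢ ball 0 1, f x ∂((padicHaar p).prod (padicHaar p)) +
        ∫ x in ball 0 1 ×ˢ sphere 0 1, f x ∂((padicHaar p).prod (padicHaar p))) +
      (∫ x in sphere 0 1 ×ˢ ball 0 1, f x ∂((padicHaar p).prod (padicHaar p)) +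
        ∫ x in sphere 0 1 ×ˢ sphere 0 1, f x ∂((padicHaar p).prod (padicHaar p))) := by
  have hb : (ball 0 1 : Set ℚ_[p]) ⊆ closedBall 0 1 := ball_subset_closedBall
  have hs : (sphere 0 1 : Set ℚ_[p]) ⊆ closedBall 0 1 := sphere_subset_closedBall
  have hms : MeasurableSet (sphere 0 1 : Set ℚ_[p]) := isClosed_sphere.measurableSet
  have hd : Disjoint (ball 0 1 : Set ℚ_[p]) (sphere 0 1) := sphere_disjoint_ball.symm
  rw [← setIntegral_union (hd.set_prod_right _ _) (measurableSet_ball.prod hms)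
      (hf.mono_set (prod_mono hb hb)) (hf.mono_set (prod_mono hb hs)),
    ← setIntegral_union (hd.set_prod_right _ _) (hms.prod hms)
      (hf.mono_set (prod_mono hs hb)) (hf.mono_set (prod_mono hs hs)),
    ← prod_union, ← prod_union, ball_union_sphere,
    ← setIntegral_union (hd.set_prod_left _ _) (hms.prod measurableSet_closedBall)
      (hf.mono_set (prod_mono hb subset_rfl)) (hf.mono_set (prod_mono hs subset_rfl)),
    ← union_prod, ball_union_sphere]

lemma setIntegral_fourPointIntegrand_eq_closedBall (h₁ : s₁ ≠ 0) (h₂ : s₂ ≠ 0) (h₃ : s₃ ≠ 0) :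
    ∫ x in {x : ℚ_[p] × ℚ_[p] | ‖x.1‖ ≤ 1 ∧ ‖x.2‖ ≤ 1 ∧ x.1 ≠ 0 ∧ x.2 ≠ 0 ∧ x.1 ≠ x.2},
        fourPointIntegrand s₁ s₂ s₃ x ∂((padicHaar p).prod (padicHaar p)) =
      ∫ x in closedBall 0 1 ×ˢ closedBall 0 1, fourPointIntegrand s₁ s₂ s₃ x
        ∂((padicHaar p).prod (padicHaar p)) := by
  refine (setIntegral_eq_of_subset_of_forall_sdiff_eq_zero
    (measurableSet_closedBall.prod measurableSet_closedBall) ?_ ?_).symm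
  · rintro x ⟨hx, hy, -⟩
    simp [hx, hy]
  · rintro x ⟨hx, hmem⟩
    simp only [mem_prod, mem_closedBall_zero_iff] at hx
    by_contra hne
    refine hmem ⟨hx.1, hx.2, ?_, ?_, ?_⟩ <;> intro h <;>
      exact hne (by simp [fourPointIntegrand, h, h₁, h₂, h₃])

end fourPoint

end padicIntegrals

/-- Explicit formula for `Z(s₁,s₂,s₃)` in the region `Re sᵢ > 0`. -/
theorem fourPoint_zeta_formula (p : ℕ) [Fact p.Prime] (s₁ s₂ s₃ : ℂ)
    (h₁ : 0 < s₁.re) (h₂ : 0 < s₂.re) (h₃ : 0 < s₃.re) :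
    (∫ x in {x : ℚ_[p] × ℚ_[p] | ‖x.1‖ ≤ 1 ∧ ‖x.2‖ ≤ 1 ∧ x.1 ≠ 0 ∧ x.2 ≠ 0 ∧ x.1 ≠ x.2},
        (‖x.1‖ : ℂ) ^ s₁ * (‖x.2‖ : ℂ) ^ s₂ * (‖x.1 - x.2‖ : ℂ) ^ s₃
        ∂((padicHaar p).prod (padicHaar p))) =
      ((1 - (p : ℂ)⁻¹) ^ 2 * (p : ℂ) ^ (-1 - s₁) / (1 - (p : ℂ) ^ (-1 - s₁)) +
        (1 - (p : ℂ)⁻¹) ^ 2 * (p : ℂ) ^ (-1 - s₂) / (1 - (p : ℂ) ^ (-1 - s₂)) +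
        (p : ℂ) ^ (-2 : ℂ) * ((p : ℂ) - 1) * ((p : ℂ) - 2) +
        (p : ℂ) ^ (-2 - s₃) * ((p : ℂ) - 1) * (1 - (p : ℂ)⁻¹) / (1 - (p : ℂ) ^ (-1 - s₃))) /
      (1 - (p : ℂ) ^ (-2 - s₁ - s₂ - s₃)) := by
  change ∫ x in _, fourPointIntegrand s₁ s₂ s₃ x ∂_ = _
  have hne {s : ℂ} (hs : 0 < s.re) : s ≠ 0 := fun h => by simp [h] at hs
  have hp : (p : ℂ) ≠ 0 := Nat.cast_ne_zero.2 (Fact.out : p.Prime).ne_zero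
  rw [setIntegral_fourPointIntegrand_eq_closedBall (hne h₁) (hne h₂) (hne h₃)]
  have h := setIntegral_closedBall_prod_eq_add (integrableOn_fourPointIntegrand (p := p) h₁ h₂ h₃)
  rw [setIntegral_fourPointIntegrand_ball_ball h₁ h₂ h₃,
    setIntegral_fourPointIntegrand_ball_sphere h₁, setIntegral_fourPointIntegrand_sphere_ball h₂,
    setIntegral_fourPointIntegrand_sphere_sphere h₁ h₂ h₃] at h
  have hunits : (1 - (p : ℂ)⁻¹) * ((1 - (p : ℂ)⁻¹) / (1 - (p : ℂ) ^ (-1 - s₃)) - (p : ℂ)⁻¹) =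
      (p : ℂ) ^ (-2 : ℂ) * ((p : ℂ) - 1) * ((p : ℂ) - 2) +
        (p : ℂ) ^ (-2 - s₃) * ((p : ℂ) - 1) * (1 - (p : ℂ)⁻¹) / (1 - (p : ℂ) ^ (-1 - s₃)) := by
    have h₃' : 1 - (p : ℂ) ^ (-1 - s₃) ≠ 0 := natCast_cpow_ne_one (by simp; linarith)
    rw [show (-2 : ℂ) - s₃ = -1 + (-1 - s₃) by ring, Complex.cpow_add _ _ hp,
      show (-2 : ℂ) = -1 + -1 by ring, Complex.cpow_add _ _ hp, Complex.cpow_neg_one]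
    field_simp
    ring
  rw [hunits] at h
  rw [eq_div_iff (natCast_cpow_ne_one (by simp; linarith))]
  linear_combination h
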